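/- Let φ be a Schwartz function on ℝ^d. Then P_t φ is a Schwartz function for every t ≥ 0, the map t ↦ P_t φ is continuous from [0,∞) to the Schwartz space S (with its Fréchet topology), the map t ↦ P_t φ(x) is differentiable in t for each x with ∂_t P_t φ = (α/2) Δ P_t φ, and t ↦ ∂_t P_t φ is also continuous from [0,∞) to S. -/

import Mathlib

open MeasureTheory Real Filter Set

noncomputable section

/-- Euclidean space `ℝ^d`. -/
abbrev Euc (d : ℕ) := EuclideanSpace ℝ (Fin d)

/-- The heat semigroup `P_t` with generator `(α/2)Δ`: for `t > 0` it is given by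
convolution with the Gaussian kernel of variance `αt`, and `P_0 f = f`. -/
def heatP (d : ℕ) (α t : ℝ) (f : Euc d → ℝ) (x : Euc d) : ℝ :=
  if t = 0 then f x
  else ∫ y : Euc d, (2 * π * α * t) ^ (-(d : ℝ) / 2) *
    Real.exp (-‖x - y‖ ^ 2 / (2 * α * t)) * f y

/-- The Laplacian of `f : ℝ^d → ℝ`, as the sum of the second partial derivatives in the
coordinate directions. -/
def lap (d : ℕ) (f : Euc d → ℝ) (x : Euc d) : ℝ :=
  ∑ i : Fin d, fderiv ℝ (fun y => fderiv ℝ f y (EuclideanSpace.single i 1)) x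
    (EuclideanSpace.single i 1)

/-- The Cole–Hopf transform `V_t φ = -α ln (P_t e^{-φ/α})`. -/
def coleHopf (d : ℕ) (α t : ℝ) (φ : Euc d → ℝ) (x : Euc d) : ℝ :=
  -α * Real.log (heatP d α t (fun y => Real.exp (-φ y / α)) x)

/-- A tempered measure: a locally finite Borel measure integrating every Schwartz function. -/
def IsTempered {d : ℕ} (μ : Measure (Euc d)) : Prop :=
  IsLocallyFiniteMeasure μ ∧ ∀ φ : SchwartzMap (Euc d) ℝ, Integrable (fun x => φ x) μ

/-- The Gaussian measure on `ℝ^d` with mean `m` and covariance `t • Id`, defined through its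
density with respect to Lebesgue measure. -/
def gaussE (d : ℕ) (m : Euc d) (t : ℝ) : Measure (Euc d) :=
  volume.withDensity fun x =>
    ENNReal.ofReal ((2 * π * t) ^ (-(d : ℝ) / 2) * Real.exp (-‖x - m‖ ^ 2 / (2 * t)))

/-- The unit cube `[0,1]^d`. -/
def unitCube (d : ℕ) : Set (Euc d) := {x | ∀ i, x i ∈ Set.Icc (0 : ℝ) 1}

/-- First-order partial derivative in direction `i`. -/
def pderivI {d : ℕ} (i : Fin d) (f : Euc d → ℝ) (x : Euc d) : ℝ :=
  fderiv ℝ f x (EuclideanSpace.single i 1)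

/-- Iterated partial derivative in direction `i`. -/
def pderivIter {d : ℕ} (i : Fin d) : ℕ → (Euc d → ℝ) → Euc d → ℝ
  | 0, f => f
  | n + 1, f => pderivI i (pderivIter i n f)

/-- The partial derivative `D^β` for a multi-index `β`. -/
def Dmulti {d : ℕ} (β : Fin d → ℕ) (f : Euc d → ℝ) : Euc d → ℝ :=
  (List.finRange d).foldr (fun i g => pderivIter i (β i) g) f

open scoped SchwartzMap LineDeriv

/-- The standard Gaussian density. -/
def gk {d : ℕ} (z : Euc d) : ℝ := (2 * π) ^ (-(d : ℝ) / 2) * Real.exp (-‖z‖ ^ 2 / 2)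

/-- Gaussian average at scale `s`. -/
def gavg {d : ℕ} {F : Type} [NormedAddCommGroup F] [NormedSpace ℝ F] (s : ℝ) (f : Euc d → F)
    (x : Euc d) : F := ∫ z : Euc d, gk z • f (x + s • z)

theorem gk_nonneg {d : ℕ} (z : Euc d) : 0 ≤ gk z := by unfold gk; positivity

theorem gk_cont {d : ℕ} : Continuous (gk (d := d)) := by unfold gk; fun_prop

theorem gauss_int {d : ℕ} {b : ℝ} (hb : 0 < b) :
    Integrable (fun z : Euc d => Real.exp (-b * ‖z‖ ^ 2)) := by
  apply Integrable.of_integral_ne_zero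
  rw [GaussianFourier.integral_rexp_neg_mul_sq_norm hb]
  positivity

theorem gk_int {d : ℕ} (k : ℕ) : Integrable (fun z : Euc d => (1 + ‖z‖) ^ k * gk z) := by
  refine Integrable.mono' ((gauss_int (d := d) (b := 1 / 4) (by norm_num)).const_mul
    ((k.factorial : ℝ) * Real.exp 2 * (2 * π) ^ (-(d : ℝ) / 2))) ?_ ?_
  · exact (Continuous.mul (by fun_prop) gk_cont).aestronglyMeasurable
  · refine Eventually.of_forall fun z => ?_
    rw [Real.norm_of_nonneg (mul_nonneg (by positivity) (gk_nonneg z))]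
    have h1 : (1 + ‖z‖) ^ k ≤ k.factorial * Real.exp (1 + ‖z‖) := by
      have := Real.pow_div_factorial_le_exp (1 + ‖z‖) (by positivity) k
      rwa [div_le_iff₀' (by positivity)] at this
    have h2 : Real.exp (1 + ‖z‖) * Real.exp (-‖z‖ ^ 2 / 2) ≤
        Real.exp 2 * Real.exp (-(1 / 4) * ‖z‖ ^ 2) := by
      rw [← Real.exp_add, ← Real.exp_add]
      apply Real.exp_le_exp.2
      nlinarith [sq_nonneg (‖z‖ - 2)]
    unfold gk
    calc _ ≤ (k.factorial * Real.exp (1 + ‖z‖)) *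
            ((2 * π) ^ (-(d : ℝ) / 2) * Real.exp (-‖z‖ ^ 2 / 2)) := by gcongr
      _ = (k.factorial * (2 * π) ^ (-(d : ℝ) / 2)) *
            (Real.exp (1 + ‖z‖) * Real.exp (-‖z‖ ^ 2 / 2)) := by ring
      _ ≤ (k.factorial * (2 * π) ^ (-(d : ℝ) / 2)) *
            (Real.exp 2 * Real.exp (-(1 / 4) * ‖z‖ ^ 2)) := by gcongr
      _ = _ := by ring

theorem gk_int0 {d : ℕ} : Integrable (fun z : Euc d => gk z) := by
  simpa using gk_int (d := d) 0

theorem gk_integral {d : ℕ} : ∫ z : Euc d, gk z = 1 := by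
  unfold gk
  have h : ∀ z : Euc d, -‖z‖ ^ 2 / 2 = -(1 / 2) * ‖z‖ ^ 2 := fun z => by ring
  simp_rw [h]
  rw [integral_const_mul, GaussianFourier.integral_rexp_neg_mul_sq_norm (by norm_num)]
  simp only [finrank_euclideanSpace, Fintype.card_fin]
  rw [show π / (1 / 2) = 2 * π by ring, ← Real.rpow_add (by positivity)]
  rw [show -(d : ℝ) / 2 + d / 2 = 0 by ring, Real.rpow_zero]

section
variable {d : ℕ} {F : Type} [NormedAddCommGroup F] [NormedSpace ℝ F]

theorem wbound (φ : 𝓢(Euc d, F)) (k : ℕ) :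
    ∃ C, 0 ≤ C ∧ ∀ x, (1 + ‖x‖) ^ k * ‖φ x‖ ≤ C := by
  refine ⟨2 ^ k * ((Finset.Iic (k, 0)).sup (schwartzSeminormFamily ℝ (Euc d) F)) φ,
    by positivity, fun x => ?_⟩
  have := SchwartzMap.one_add_le_sup_seminorm_apply (𝕜 := ℝ) (m := (k, 0)) (k := k) (n := 0)
    le_rfl le_rfl φ x
  rw [norm_iteratedFDeriv_zero] at this
  exact this

theorem peetre (k : ℕ) {S u : ℝ} (hu : |u| ≤ S) (x z : Euc d) :
    ‖x‖ ^ k ≤ (1 + ‖x + u • z‖) ^ k * ((1 + S) ^ k * (1 + ‖z‖) ^ k) := by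
  have hS : 0 ≤ S := (abs_nonneg u).trans hu
  rw [← mul_pow, ← mul_pow]
  gcongr
  have h1 : ‖x‖ ≤ ‖x + u • z‖ + ‖u • z‖ := by
    simpa using norm_sub_le (x + u • z) (u • z)
  have h2 : ‖u • z‖ ≤ S * ‖z‖ := by
    rw [norm_smul, Real.norm_eq_abs]; gcongr
  have h3 : 0 ≤ S * ‖z‖ := by positivity
  nlinarith [norm_nonneg z, norm_nonneg (x + u • z),
    mul_nonneg (norm_nonneg (x + u • z)) (add_nonneg (add_nonneg hS (norm_nonneg z)) h3)]

theorem gavg_integrable (φ : 𝓢(Euc d, F)) (s : ℝ) (x : Euc d) :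
    Integrable (fun z : Euc d => gk z • φ (x + s • z)) := by
  obtain ⟨C, hC, h⟩ := wbound φ 0
  refine Integrable.mono' (gk_int0.mul_const C) ?_ (Eventually.of_forall fun z => ?_)
  · exact (gk_cont.smul (φ.continuous.comp (by fun_prop))).aestronglyMeasurable
  · rw [norm_smul, Real.norm_of_nonneg (gk_nonneg z)]
    exact mul_le_mul_of_nonneg_left (by simpa using h (x + s • z)) (gk_nonneg z)

theorem gavg_hasFDerivAt (φ : 𝓢(Euc d, F)) (s : ℝ) (x : Euc d) :
    HasFDerivAt (gavg s φ) (gavg s (SchwartzMap.fderivCLM ℝ (Euc d) F φ) x) x := by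
  obtain ⟨C, hC, h⟩ := wbound (SchwartzMap.fderivCLM ℝ (Euc d) F φ) 0
  refine hasFDerivAt_integral_of_dominated_of_fderiv_le (s := Set.univ)
    (F' := fun x z => gk z • SchwartzMap.fderivCLM ℝ (Euc d) F φ (x + s • z))
    (bound := fun z => gk z * C) Filter.univ_mem
    (Eventually.of_forall fun y => (gavg_integrable φ s y).aestronglyMeasurable)
    (gavg_integrable φ s x) (gavg_integrable _ s x).aestronglyMeasurable
    (Eventually.of_forall fun z y _ => ?_) (gk_int0.mul_const C)
    (Eventually.of_forall fun z y _ => ?_)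
  · rw [norm_smul, Real.norm_of_nonneg (gk_nonneg z)]
    exact mul_le_mul_of_nonneg_left (by simpa using h (y + s • z)) (gk_nonneg z)
  · have := (φ.hasFDerivAt (y + s • z)).comp y ((hasFDerivAt_id y).add_const (s • z))
    exact HasFDerivAt.const_smul this (gk z)

theorem gavg_fderiv (φ : 𝓢(Euc d, F)) (s : ℝ) :
    fderiv ℝ (gavg s φ) = gavg s (SchwartzMap.fderivCLM ℝ (Euc d) F φ) :=
  funext fun x => (gavg_hasFDerivAt φ s x).fderiv

theorem gavg_fderiv_apply [CompleteSpace F] (φ : 𝓢(Euc d, F)) (s : ℝ) (x v : Euc d) :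
    fderiv ℝ (gavg s φ) x v = gavg s (∂_{v} φ : 𝓢(Euc d, F)) x := by
  rw [gavg_fderiv]
  unfold gavg
  rw [ContinuousLinearMap.integral_apply (gavg_integrable _ s x)]
  rfl

end

theorem gavg_contDiff {d : ℕ} (n : ℕ) : ∀ {F : Type} [NormedAddCommGroup F] [NormedSpace ℝ F]
    (φ : 𝓢(Euc d, F)) (s : ℝ), ContDiff ℝ n (gavg s φ) := by
  induction n with
  | zero =>
    intro F _ _ φ s
    have : Differentiable ℝ (gavg s φ) := fun x => (gavg_hasFDerivAt φ s x).differentiableAt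
    exact contDiff_zero.2 this.continuous
  | succ n ih =>
    intro F _ _ φ s
    rw [show ((n + 1 : ℕ) : WithTop ℕ∞) = (n : WithTop ℕ∞) + 1 by norm_cast]
    rw [contDiff_succ_iff_fderiv]
    refine ⟨fun x => (gavg_hasFDerivAt φ s x).differentiableAt, by simp, ?_⟩
    rw [gavg_fderiv]
    exact ih _ s

theorem gavg_bound {d : ℕ} (k n : ℕ) : ∀ {F : Type} [NormedAddCommGroup F] [NormedSpace ℝ F]
    (φ : 𝓢(Euc d, F)) (s : ℝ), ∃ C, ∀ x,
    ‖x‖ ^ k * ‖iteratedFDeriv ℝ n (gavg s φ) x‖ ≤ C := by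
  induction n with
  | zero =>
    intro F _ _ φ s
    obtain ⟨C, hC, h⟩ := wbound φ k
    refine ⟨∫ z : Euc d, (1 + ‖z‖) ^ k * gk z * ((1 + |s|) ^ k * C), fun x => ?_⟩
    rw [norm_iteratedFDeriv_zero]
    rw [show ‖x‖ ^ k = ‖(‖x‖ ^ k : ℝ)‖ by simp, ← norm_smul]
    unfold gavg
    rw [← integral_smul]
    refine norm_integral_le_of_norm_le ((gk_int k).mul_const _) (Eventually.of_forall fun z => ?_)
    rw [norm_smul, norm_smul, Real.norm_of_nonneg (gk_nonneg z), norm_pow, norm_norm]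
    have g0 := gk_nonneg z
    calc ‖x‖ ^ k * (gk z * ‖φ (x + s • z)‖)
        ≤ ((1 + ‖x + s • z‖) ^ k * ((1 + |s|) ^ k * (1 + ‖z‖) ^ k)) *
          (gk z * ‖φ (x + s • z)‖) := by gcongr; exact peetre k le_rfl x z
      _ = (1 + ‖z‖) ^ k * gk z * ((1 + |s|) ^ k * ((1 + ‖x + s • z‖) ^ k * ‖φ (x + s • z)‖)) := by
          ring
      _ ≤ _ := by gcongr; exact h _
  | succ n ih =>
    intro F _ _ φ s
    obtain ⟨C, h⟩ := ih (SchwartzMap.fderivCLM ℝ (Euc d) F φ) s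
    refine ⟨C, fun x => ?_⟩
    rw [← norm_iteratedFDeriv_fderiv, gavg_fderiv]
    exact h x

theorem gavg_diff_bound {d : ℕ} (k n : ℕ) (S : ℝ) (hS : 0 ≤ S) :
    ∀ {F : Type} [NormedAddCommGroup F] [NormedSpace ℝ F]
    (φ : 𝓢(Euc d, F)), ∃ C, 0 ≤ C ∧ ∀ s r : ℝ, |s| ≤ S → |r| ≤ S → ∀ x,
    ‖x‖ ^ k * ‖iteratedFDeriv ℝ n (fun y => gavg s φ y - gavg r φ y) x‖ ≤ C * |s - r| := by
  induction n with
  | zero =>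
    intro F _ _ φ
    obtain ⟨C, hC, h⟩ := wbound (SchwartzMap.fderivCLM ℝ (Euc d) F φ) k
    refine ⟨∫ z : Euc d, (1 + ‖z‖) ^ (k + 1) * gk z * ((1 + S) ^ k * C), ?_, fun s r hs hr x => ?_⟩
    · exact integral_nonneg fun z => by have := gk_nonneg z; positivity
    rw [norm_iteratedFDeriv_zero]
    rw [show ‖x‖ ^ k = ‖(‖x‖ ^ k : ℝ)‖ by simp, ← norm_smul]
    unfold gavg
    rw [← integral_sub (gavg_integrable φ s x) (gavg_integrable φ r x), ← integral_smul,
      ← integral_mul_const]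
    refine norm_integral_le_of_norm_le (((gk_int (k + 1)).mul_const _).mul_const _)
      (Eventually.of_forall fun z => ?_)
    rw [← smul_sub, norm_smul, norm_smul, Real.norm_of_nonneg (gk_nonneg z), norm_pow, norm_norm]
    have g0 := gk_nonneg z
    have key : ‖x‖ ^ k * ‖φ (x + s • z) - φ (x + r • z)‖ ≤
        (1 + S) ^ k * (1 + ‖z‖) ^ k * C * ‖z‖ * |s - r| := by
      have hd : ∀ u ∈ Set.uIcc r s, HasDerivWithinAt
          (fun u : ℝ => (‖x‖ ^ k : ℝ) • φ (x + u • z))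
          ((‖x‖ ^ k : ℝ) • fderiv ℝ φ (x + u • z) z) (Set.uIcc r s) u := by
        intro u _
        have h1 : HasDerivAt (fun u : ℝ => x + u • z) z u := by
          simpa using ((hasDerivAt_id u).smul_const z).const_add x
        exact (((φ.hasFDerivAt (x + u • z)).comp_hasDerivAt u h1).const_smul _).hasDerivWithinAt
      have hb : ∀ u ∈ Set.uIcc r s, ‖(‖x‖ ^ k : ℝ) • fderiv ℝ φ (x + u • z) z‖ ≤
          (1 + S) ^ k * (1 + ‖z‖) ^ k * C * ‖z‖ := by
        intro u hu
        have hu' : |u| ≤ S := by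
          have h3 := (convex_Icc (-S) S).ordConnected.uIcc_subset (abs_le.1 hr) (abs_le.1 hs) hu
          exact abs_le.2 h3
        rw [norm_smul, norm_pow, norm_norm]
        have := h (x + u • z)
        rw [SchwartzMap.fderivCLM_apply] at this
        calc ‖x‖ ^ k * ‖fderiv ℝ φ (x + u • z) z‖
            ≤ ((1 + ‖x + u • z‖) ^ k * ((1 + S) ^ k * (1 + ‖z‖) ^ k)) *
              (‖fderiv ℝ φ (x + u • z)‖ * ‖z‖) := by
                gcongr
                · exact peetre k hu' x z
                · exact ContinuousLinearMap.le_opNorm _ _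
          _ = (1 + S) ^ k * (1 + ‖z‖) ^ k * ((1 + ‖x + u • z‖) ^ k *
              ‖fderiv ℝ φ (x + u • z)‖) * ‖z‖ := by ring
          _ ≤ _ := by gcongr
      have := (convex_uIcc r s).norm_image_sub_le_of_norm_hasDerivWithin_le hd hb
        Set.left_mem_uIcc Set.right_mem_uIcc
      rw [← smul_sub, norm_smul, norm_pow, norm_norm] at this
      simpa [Real.norm_eq_abs] using this
    calc ‖x‖ ^ k * (gk z * ‖φ (x + s • z) - φ (x + r • z)‖)
        = gk z * (‖x‖ ^ k * ‖φ (x + s • z) - φ (x + r • z)‖) := by ring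
      _ ≤ gk z * ((1 + S) ^ k * (1 + ‖z‖) ^ k * C * ‖z‖ * |s - r|) := by gcongr
      _ ≤ gk z * ((1 + S) ^ k * (1 + ‖z‖) ^ k * C * (1 + ‖z‖) * |s - r|) := by
          gcongr; linarith
      _ = _ := by ring
  | succ n ih =>
    intro F _ _ φ
    obtain ⟨C, hC, h⟩ := ih (SchwartzMap.fderivCLM ℝ (Euc d) F φ)
    refine ⟨C, hC, fun s r hs hr x => ?_⟩
    rw [← norm_iteratedFDeriv_fderiv]
    have : fderiv ℝ (fun y => gavg s φ y - gavg r φ y) =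
        fun y => gavg s (SchwartzMap.fderivCLM ℝ (Euc d) F φ) y -
          gavg r (SchwartzMap.fderivCLM ℝ (Euc d) F φ) y := funext fun y =>
      ((gavg_hasFDerivAt φ s y).sub (gavg_hasFDerivAt φ r y)).fderiv
    rw [this]
    exact h s r hs hr x

/-- The Gaussian average as a Schwartz map. -/
def gavgS {d : ℕ} (φ : 𝓢(Euc d, ℝ)) (s : ℝ) : 𝓢(Euc d, ℝ) where
  toFun := gavg s φ
  smooth' := contDiff_infty.2 fun n => gavg_contDiff n φ s
  decay' k n := gavg_bound k n φ s

theorem gavgS_apply {d : ℕ} (φ : 𝓢(Euc d, ℝ)) (s : ℝ) (x : Euc d) :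
    gavgS φ s x = gavg s φ x := rfl

theorem gavgS_cont {d : ℕ} (φ : 𝓢(Euc d, ℝ)) : Continuous (gavgS φ) := by
  rw [continuous_iff_continuousAt]
  intro r
  rw [ContinuousAt, (schwartz_withSeminorms ℝ (Euc d) ℝ).tendsto_nhds]
  rintro ⟨k, n⟩ ε hε
  obtain ⟨C, hC, h⟩ := gavg_diff_bound k n (|r| + 1) (by positivity) φ
  have h1 : Tendsto (fun s : ℝ => C * |s - r|) (nhds r) (nhds 0) := by
    have : Continuous (fun s : ℝ => C * |s - r|) := by fun_prop
    simpa using this.tendsto r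
  filter_upwards [h1.eventually_lt_const hε, Metric.ball_mem_nhds r one_pos] with s hs hs'
  refine lt_of_le_of_lt ?_ hs
  refine SchwartzMap.seminorm_le_bound ℝ k n _ (by positivity) fun x => ?_
  have hs2 : |s| ≤ |r| + 1 := by
    rw [Metric.mem_ball, Real.dist_eq] at hs'
    have := abs_sub_abs_le_abs_sub s r
    linarith
  exact h s r hs2 (by linarith) x

theorem gk_hasFDerivAt {d : ℕ} (z : Euc d) :
    HasFDerivAt (gk (d := d)) (-(gk z) • innerSL ℝ z) z := by
  have h1 : HasFDerivAt (fun z : Euc d => ‖z‖ ^ 2) (2 • innerSL ℝ z) z :=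
    (hasStrictFDerivAt_norm_sq z).hasFDerivAt
  have h2 : HasFDerivAt (fun z : Euc d => -‖z‖ ^ 2 / 2) (-innerSL ℝ z) z := by
    have := h1.const_mul (-(1 / 2 : ℝ))
    convert! this using 1
    · ext y; ring
    · ext y; simp
  have h3 := (h2.exp).const_mul ((2 * π) ^ (-(d : ℝ) / 2))
  convert! h3 using 1
  ext y
  simp [gk]
  ring

/-- A dominated-integrability criterion: Gaussian times a function of linear growth. -/
theorem gk_mul_integrable {d : ℕ} (f : Euc d → ℝ) (hf : Continuous f) (C : ℝ)
    (h : ∀ z, |f z| ≤ C * (1 + ‖z‖)) : Integrable (fun z : Euc d => gk z * f z) := by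
  refine Integrable.mono' ((gk_int (d := d) 1).mul_const C)
    (gk_cont.mul hf).aestronglyMeasurable (Eventually.of_forall fun z => ?_)
  rw [norm_mul, Real.norm_of_nonneg (gk_nonneg z), Real.norm_eq_abs]
  calc gk z * |f z| ≤ gk z * (C * (1 + ‖z‖)) := mul_le_mul_of_nonneg_left (h z) (gk_nonneg z)
    _ = _ := by ring

theorem coord_le {d : ℕ} (z : Euc d) (i : Fin d) : |z i| ≤ ‖z‖ := by
  simpa using PiLp.norm_apply_le z i

theorem gk_coord_integrable {d : ℕ} (ψ : 𝓢(Euc d, ℝ)) (s : ℝ) (x : Euc d) (i : Fin d) :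
    Integrable (fun z : Euc d => gk z * (z i * ψ (x + s • z))) := by
  obtain ⟨C, hC, h⟩ := wbound ψ 0
  refine gk_mul_integrable _ (Continuous.mul (by fun_prop) (ψ.continuous.comp (by fun_prop))) C
    fun z => ?_
  rw [abs_mul, mul_comm C]
  have := h (x + s • z)
  simp only [pow_zero, one_mul, Real.norm_eq_abs] at this
  have := coord_le z i
  gcongr
  linarith

theorem stein {d : ℕ} (ψ : 𝓢(Euc d, ℝ)) (s : ℝ) (x : Euc d) (i : Fin d) :
    ∫ z : Euc d, gk z * (z i * ψ (x + s • z)) =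
      s * gavg s (∂_{(EuclideanSpace.single i 1 : Euc d)} ψ : 𝓢(Euc d, ℝ)) x := by
  have hψ : ∀ z : Euc d, HasFDerivAt (fun z => ψ (x + s • z))
      (s • fderiv ℝ ψ (x + s • z)) z := by
    intro z
    have h1 : HasFDerivAt (fun z : Euc d => x + s • z) (s • ContinuousLinearMap.id ℝ (Euc d)) z :=
      ((hasFDerivAt_id z).const_smul s).const_add x
    have := (ψ.hasFDerivAt (x + s • z)).comp z h1
    convert! this using 1
    ext v; simp
  have e1 : ∀ z : Euc d, (-(gk z) • innerSL ℝ z) (EuclideanSpace.single i 1) * ψ (x + s • z)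
      = -(gk z * (z i * ψ (x + s • z))) := by
    intro z
    simp [EuclideanSpace.inner_single_right]
    ring
  have e2 : ∀ z : Euc d, gk z * (s • fderiv ℝ ψ (x + s • z)) (EuclideanSpace.single i 1)
      = s * (gk z • (∂_{(EuclideanSpace.single i 1 : Euc d)} ψ : 𝓢(Euc d, ℝ)) (x + s • z)) := by
    intro z
    rw [SchwartzMap.lineDerivOp_apply_eq_fderiv]
    simp
    ring
  have key := integral_bilinear_hasFDerivAt_right_eq_neg_left_of_integrable
    (μ := (volume : Measure (Euc d))) (f := gk (d := d)) (g := fun z => ψ (x + s • z))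
    (f' := fun z => -(gk z) • innerSL ℝ z) (g' := fun z => s • fderiv ℝ ψ (x + s • z))
    (v := EuclideanSpace.single i 1) (B := ContinuousLinearMap.mul ℝ ℝ)
    (by
      simp only [ContinuousLinearMap.mul_apply', e1]
      exact (gk_coord_integrable ψ s x i).neg)
    (by
      simp only [ContinuousLinearMap.mul_apply', e2]
      exact (gavg_integrable _ s x).const_mul s)
    (by
      simp only [ContinuousLinearMap.mul_apply']
      exact gavg_integrable ψ s x)
    (fun z _ => gk_hasFDerivAt z) (fun z _ => hψ z)
  simp only [ContinuousLinearMap.mul_apply', e1, e2] at key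
  rw [integral_const_mul, integral_neg, neg_neg] at key
  exact key.symm

/-- The Laplacian of a Schwartz function as a Schwartz function. -/
def lapS {d : ℕ} (φ : 𝓢(Euc d, ℝ)) : 𝓢(Euc d, ℝ) :=
  ∑ i : Fin d, ∂_{(EuclideanSpace.single i 1 : Euc d)}
    (∂_{(EuclideanSpace.single i 1 : Euc d)} φ : 𝓢(Euc d, ℝ))

theorem gavg_lapS {d : ℕ} (φ : 𝓢(Euc d, ℝ)) (s : ℝ) (x : Euc d) :
    gavg s (lapS φ) x = ∑ i : Fin d, gavg s (∂_{(EuclideanSpace.single i 1 : Euc d)}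
      (∂_{(EuclideanSpace.single i 1 : Euc d)} φ : 𝓢(Euc d, ℝ)) : 𝓢(Euc d, ℝ)) x := by
  unfold gavg lapS
  rw [← integral_finsetSum _ fun i _ => gavg_integrable _ s x]
  congr 1
  ext z
  rw [← Finset.smul_sum]
  congr 1
  simp

theorem lap_gavg {d : ℕ} (φ : 𝓢(Euc d, ℝ)) (s : ℝ) (x : Euc d) :
    lap d (gavg s φ) x = gavg s (lapS φ) x := by
  rw [gavg_lapS]
  unfold lap
  refine Finset.sum_congr rfl fun i _ => ?_
  simp_rw [gavg_fderiv_apply]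

theorem fderiv_expand {d : ℕ} (L : Euc d →L[ℝ] ℝ) (z : Euc d) :
    L z = ∑ i : Fin d, z i * L (EuclideanSpace.single i 1) := by
  conv_lhs => rw [← (EuclideanSpace.basisFun (Fin d) ℝ).sum_repr z]
  simp [map_sum]

theorem gavg_hasDerivAt {d : ℕ} (φ : 𝓢(Euc d, ℝ)) (s : ℝ) (x : Euc d) :
    HasDerivAt (fun s => gavg s φ x) (s * gavg s (lapS φ) x) s := by
  obtain ⟨C, hC, h⟩ := wbound (SchwartzMap.fderivCLM ℝ (Euc d) ℝ φ) 0
  have hb : ∀ (u : ℝ) (z : Euc d), |fderiv ℝ φ (x + u • z) z| ≤ C * (1 + ‖z‖) := by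
    intro u z
    have h1 := h (x + u • z)
    rw [SchwartzMap.fderivCLM_apply, pow_zero, one_mul] at h1
    calc |fderiv ℝ φ (x + u • z) z| ≤ ‖fderiv ℝ φ (x + u • z)‖ * ‖z‖ := by
          rw [← Real.norm_eq_abs]; exact ContinuousLinearMap.le_opNorm _ _
      _ ≤ C * (1 + ‖z‖) := by gcongr; linarith
  have hc : Continuous (fun z : Euc d => fderiv ℝ φ (x + s • z) z) := by
    have h2 : Continuous (fun z : Euc d =>
      SchwartzMap.fderivCLM ℝ (Euc d) ℝ φ (x + s • z)) :=
      (SchwartzMap.fderivCLM ℝ (Euc d) ℝ φ).continuous.comp (by fun_prop)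
    exact h2.clm_apply continuous_id
  have key := hasDerivAt_integral_of_dominated_loc_of_deriv_le
    (μ := (volume : Measure (Euc d))) (F := fun u z => gk z • φ (x + u • z))
    (F' := fun u z => gk z * fderiv ℝ φ (x + u • z) z) (x₀ := s) (s := Set.univ)
    (bound := fun z => (1 + ‖z‖) ^ 1 * gk z * C) Filter.univ_mem
    (Eventually.of_forall fun u => (gavg_integrable φ u x).aestronglyMeasurable)
    (gavg_integrable φ s x) (gk_cont.mul hc).aestronglyMeasurable
    (Eventually.of_forall fun z u _ => by
      rw [norm_mul, Real.norm_of_nonneg (gk_nonneg z), Real.norm_eq_abs]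
      calc gk z * |fderiv ℝ φ (x + u • z) z| ≤ gk z * (C * (1 + ‖z‖)) :=
            mul_le_mul_of_nonneg_left (hb u z) (gk_nonneg z)
        _ = _ := by ring)
    ((gk_int 1).mul_const C)
    (Eventually.of_forall fun z u _ => by
      have h1 : HasDerivAt (fun u : ℝ => x + u • z) z u := by
        simpa using ((hasDerivAt_id u).smul_const z).const_add x
      exact ((φ.hasFDerivAt (x + u • z)).comp_hasDerivAt u h1).const_smul (gk z))
  have e : ∫ z : Euc d, gk z * fderiv ℝ φ (x + s • z) z = s * gavg s (lapS φ) x := by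
    rw [gavg_lapS, Finset.mul_sum]
    simp_rw [← stein]
    rw [← integral_finsetSum _ fun i _ => gk_coord_integrable _ s x i]
    congr 1
    ext z
    rw [fderiv_expand, Finset.mul_sum]
    rfl
  rw [← e]
  exact key.2

theorem heatP_eq {d : ℕ} {α t : ℝ} (hα : 0 < α) (ht : 0 ≤ t) (f : Euc d → ℝ) :
    heatP d α t f = gavg (√(α * t)) f := by
  funext x
  unfold heatP
  split_ifs with h0
  · subst h0
    simp only [gavg, mul_zero, Real.sqrt_zero, zero_smul, add_zero, smul_eq_mul]
    rw [integral_mul_const, gk_integral, one_mul]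
  · have ht' : 0 < t := lt_of_le_of_ne ht (Ne.symm h0)
    have hαt : 0 < α * t := by positivity
    set s := √(α * t) with hs
    have hs0 : 0 < s := Real.sqrt_pos.2 hαt
    have hs2 : s ^ 2 = α * t := Real.sq_sqrt hαt.le
    unfold gavg
    have e1 : ∀ z : Euc d, gk z • f (x + s • z) =
        (fun w : Euc d => gk (s⁻¹ • w) • f (x + w)) (s • z) := by
      intro z
      simp [smul_smul, inv_mul_cancel₀ hs0.ne']
    rw [integral_congr_ae (Eventually.of_forall e1)]
    rw [Measure.integral_comp_smul volume (fun w : Euc d => gk (s⁻¹ • w) • f (x + w)) s, ← integral_add_left_eq_self (μ := volume) _ x, smul_eq_mul,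
      ← integral_const_mul]
    congr 1
    ext w
    rw [finrank_euclideanSpace, Fintype.card_fin, abs_of_pos (by positivity), gk]
    have e2 : (2 * π * α * t) ^ (-(d : ℝ) / 2) = (2 * π) ^ (-(d : ℝ) / 2) * (s ^ d)⁻¹ := by
      rw [mul_assoc (2 * π), Real.mul_rpow (by positivity) hαt.le, ← hs2]
      congr 1
      rw [← Real.rpow_natCast s 2, ← Real.rpow_mul hs0.le, ← Real.rpow_natCast s d,
        ← Real.rpow_neg hs0.le]
      congr 1
      push_cast
      ring
    have e3 : -‖x - (x + w)‖ ^ 2 / (2 * α * t) = -‖s⁻¹ • w‖ ^ 2 / 2 := by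
      rw [norm_smul, mul_pow, norm_inv, Real.norm_of_nonneg hs0.le, inv_pow, hs2]
      simp
      field_simp
    rw [e2, e3, smul_eq_mul]
    ring

/-- for a Schwartz function `φ`, `P_t φ` is Schwartz for every `t ≥ 0`,
the map `t ↦ P_t φ` is continuous from `[0,∞)` into the Schwartz space, `t ↦ P_t φ(x)` is
differentiable with `∂_t P_t φ = (α/2) Δ P_t φ`, and `t ↦ ∂_t P_t φ` is continuous into
the Schwartz space as well. -/
theorem statement2 (d : ℕ) (hd : 1 ≤ d) (α : ℝ) (hα : 0 < α)
    (φ : SchwartzMap (Euc d) ℝ) :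
    ∃ F G : ℝ → SchwartzMap (Euc d) ℝ,
      (∀ t ≥ (0 : ℝ), ∀ x, F t x = heatP d α t (fun y => φ y) x) ∧
      ContinuousOn F (Set.Ici 0) ∧
      (∀ t ≥ (0 : ℝ), ∀ x,
        HasDerivWithinAt (fun s => heatP d α s (fun y => φ y) x)
          (α / 2 * lap d (heatP d α t (fun y => φ y)) x) (Set.Ici 0) t ∧
        G t x = α / 2 * lap d (heatP d α t (fun y => φ y)) x) ∧
      ContinuousOn G (Set.Ici 0) := by
  have hA : ∀ t ≥ (0 : ℝ), heatP d α t (fun y => φ y) = gavg (√(α * t)) φ :=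
    fun t ht => heatP_eq hα ht _
  have hcont : ∀ ψ : SchwartzMap (Euc d) ℝ, Continuous (fun t : ℝ => gavgS ψ (√(α * t))) :=
    fun ψ => (gavgS_cont ψ).comp (by fun_prop)
  have hpt : ∀ (ψ : SchwartzMap (Euc d) ℝ) (x : Euc d),
      Continuous (fun t : ℝ => gavg (√(α * t)) ψ x) := by
    intro ψ x
    have h1 : Continuous (fun s : ℝ => gavg s ψ x) :=
      continuous_iff_continuousAt.2 fun s => (gavg_hasDerivAt ψ s x).continuousAt
    exact h1.comp (by fun_prop : Continuous fun t : ℝ => √(α * t))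
  have hpos : ∀ (x : Euc d) (t : ℝ), 0 < t → HasDerivAt (fun t : ℝ => gavg (√(α * t)) φ x)
      (α / 2 * gavg (√(α * t)) (lapS φ) x) t := by
    intro x t ht
    have hαt : 0 < α * t := by positivity
    have hs0 : 0 < √(α * t) := Real.sqrt_pos.2 hαt
    have h1 : HasDerivAt (fun t : ℝ => √(α * t)) (α / (2 * √(α * t))) t := by
      have h2 : HasDerivAt (fun t : ℝ => α * t) α t := by
        simpa using (hasDerivAt_id t).const_mul α
      exact h2.sqrt hαt.ne'
    have := (gavg_hasDerivAt φ (√(α * t)) x).comp t h1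
    convert! this using 1
    field_simp
  refine ⟨fun t => gavgS φ (√(α * t)), fun t => (α / 2) • gavgS (lapS φ) (√(α * t)),
    fun t ht x => ?_, (hcont φ).continuousOn, fun t ht x => ⟨?_, ?_⟩,
    ((hcont (lapS φ)).const_smul (α / 2)).continuousOn⟩
  · rw [hA t ht, gavgS_apply]
  · rw [hA t ht, lap_gavg]
    have hD : HasDerivWithinAt (fun t : ℝ => gavg (√(α * t)) φ x)
        (α / 2 * gavg (√(α * t)) (lapS φ) x) (Set.Ici 0) t := by
      rcases eq_or_lt_of_le ht with h0 | h0
      · subst h0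
        refine hasDerivWithinAt_Ici_of_tendsto_deriv (s := Set.Ioi 0)
          (fun t ht => (hpos x t ht).differentiableAt.differentiableWithinAt)
          (hpt φ x).continuousWithinAt self_mem_nhdsWithin ?_
        have h1 : Tendsto (fun t : ℝ => α / 2 * gavg (√(α * t)) (lapS φ) x)
            (nhdsWithin 0 (Set.Ioi 0)) (nhds (α / 2 * gavg (√(α * 0)) (lapS φ) x)) :=
          (((hpt (lapS φ) x).const_mul (α / 2)).tendsto 0).mono_left nhdsWithin_le_nhds
        refine h1.congr' ?_
        filter_upwards [self_mem_nhdsWithin] with t ht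
        exact (hpos x t ht).deriv.symm
      · exact (hpos x t h0).hasDerivWithinAt
    exact hD.congr (fun s hs => by rw [hA s hs]) (by rw [hA t ht])
  · rw [hA t ht, lap_gavg]
    rfl
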